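/- arXiv:1905.04785 — 3 statements merged into one kernel-verified Lean document; each statement's English description precedes it below -/
import Mathlib

section
/- Let n ≥ 3 be an integer. Then Σ_{m : ZMod n} Σ_{k : ZMod n} #{ x : ZMod n → ZMod n bijective | ∀ i : ZMod n, x i = x (m - (i + 1)) + k } equals (n/2) * n!! if n is even and 0 if n is odd. -/
open Nat

/-!
Let positions and labels run over a finite abelian group with `n` elements, not all of whose
doubles vanish. Write `ρ` for the reflection `i ↦ m - (i + c)` of the positions and `τ` for the
translation by `k` of the labels. A string is fixed exactly when, as a permutation, it conjugates
`ρ` into `τ⁻¹`, so the fixed strings, if there are any, form a coset of the centralizer of `ρ`. As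
`ρ` has order two, conjugacy forces `k` to have order two; then `τ` has no fixed point, hence
neither does `ρ`, which means that `m - c` is not a double. Conversely, all fixed-point-free
involutions of a set with `n` elements are conjugate, and the centralizer of each has
`2 ^ (n / 2) * (n / 2)! = n‼` elements. A cyclic group of even order `n` has `n / 2` non-doubles and
one element of order two; in a group of odd order every element is a double.
-/

open Equiv Finset

section Conjugators

variable {G : Type*} [Group G] {g t : G}

theorem isConj_iff_exists_semiconjBy : IsConj g t ↔ ∃ c : G, SemiconjBy c g t := by
  simp only [isConj_iff, SemiconjBy, mul_inv_eq_iff_eq_mul]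

theorem nat_card_semiconjBy_of_isConj (h : IsConj g t) :
    Nat.card {x : G // SemiconjBy x g t} = Nat.card (Subgroup.centralizer {g}) := by
  obtain ⟨c, hc⟩ := isConj_iff_exists_semiconjBy.1 h
  refine (Nat.card_congr ((Equiv.mulLeft c).subtypeEquiv fun z => ?_)).symm
  rw [Subgroup.mem_centralizer_singleton_iff, coe_mulLeft, SemiconjBy, ← mul_assoc t, ← hc.eq,
    mul_assoc, mul_assoc, mul_right_inj]

theorem nat_card_semiconjBy_of_not_isConj (h : ¬IsConj g t) :
    Nat.card {x : G // SemiconjBy x g t} = 0 := by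
  have : IsEmpty {x : G // SemiconjBy x g t} :=
    ⟨fun x => h (isConj_iff_exists_semiconjBy.2 ⟨x.1, x.2⟩)⟩
  exact Nat.card_of_isEmpty

end Conjugators

section Permutations

variable {α : Type*} {g t : Perm α}

theorem nat_card_bijective_eq_nat_card_semiconjBy (g t : Perm α) :
    Nat.card {x : α → α // Function.Bijective x ∧ ∀ i, x i = t (x (g i))} =
      Nat.card {σ : Perm α // SemiconjBy σ g t⁻¹} := by
  have hfixed (σ : Perm α) : SemiconjBy σ g t⁻¹ ↔ ∀ i, σ i = t (σ (g i)) := by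
    simp only [SemiconjBy, eq_inv_mul_iff_mul_eq, Perm.ext_iff, Perm.mul_apply, eq_comm]
  symm
  refine Nat.card_congr (Equiv.ofBijective
    (fun σ => ⟨σ.1, σ.1.bijective, (hfixed σ.1).1 σ.2⟩) ⟨fun σ σ' h => ?_, ?_⟩)
  · exact Subtype.ext (DFunLike.coe_injective (congrArg Subtype.val h))
  · rintro ⟨x, hbij, hx⟩
    exact ⟨⟨Equiv.ofBijective x hbij, (hfixed _).2 hx⟩, rfl⟩

theorem mem_derangements_of_isConj (h : IsConj g t) (hg : g ∈ derangements α) :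
    t ∈ derangements α := by
  obtain ⟨c, rfl⟩ := isConj_iff.1 h
  exact fun i hi => hg (c⁻¹ i) (Perm.eq_inv_iff_eq.2 hi)

theorem sum_cycleType_of_mem_derangements [Fintype α] [DecidableEq α]
    (hg : g ∈ derangements α) : g.cycleType.sum = Fintype.card α := by
  have hsupport : g.support = univ := by
    ext i
    simpa using hg i
  rw [g.sum_cycleType, hsupport, Finset.card_univ]

theorem cycleType_of_sq_eq_one_of_mem_derangements [Fintype α] [DecidableEq α]
    (hg2 : g ^ 2 = 1) (hg : g ∈ derangements α) :
    g.cycleType = Multiset.replicate (Fintype.card α / 2) 2 := by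
  have htwo := Perm.cycleType_of_pow_prime_eq_one hg2
  rw [← sum_cycleType_of_mem_derangements hg, htwo]
  simp

theorem isConj_of_sq_eq_one_of_mem_derangements [Finite α] (hg2 : g ^ 2 = 1)
    (hg : g ∈ derangements α) (ht2 : t ^ 2 = 1) (ht : t ∈ derangements α) : IsConj g t := by
  classical
  have := Fintype.ofFinite α
  rw [Perm.isConj_iff_cycleType_eq, cycleType_of_sq_eq_one_of_mem_derangements hg2 hg,
    cycleType_of_sq_eq_one_of_mem_derangements ht2 ht]

theorem nat_card_centralizer_of_sq_eq_one_of_mem_derangements [Fintype α] (hg2 : g ^ 2 = 1)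
    (hg : g ∈ derangements α) :
    Nat.card (Subgroup.centralizer {g}) = (Fintype.card α)‼ := by
  classical
  have htype := cycleType_of_sq_eq_one_of_mem_derangements hg2 hg
  have hsum := sum_cycleType_of_mem_derangements hg
  generalize Fintype.card α / 2 = h at htype
  have hcard : Fintype.card α = 2 * h := by
    rw [← hsum, htype, Multiset.sum_replicate, smul_eq_mul, mul_comm]
  have hprod :
      ∏ n ∈ (Multiset.replicate h 2).toFinset, ((Multiset.replicate h 2).count n)! = h ! := by
    rcases eq_or_ne h 0 with rfl | hh
    · simp
    · simp [Multiset.toFinset_replicate, hh]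
  rw [Perm.nat_card_centralizer, hsum, htype, hprod, hcard, doubleFactorial_two_mul]
  simp

end Permutations

section AddGroup

variable {A : Type*}

theorem orderOf_addRight [AddGroup A] (k : A) : orderOf (Equiv.addRight k) = addOrderOf k := by
  have hpow (n : ℕ) : Equiv.addRight k ^ n = 1 ↔ n • k = 0 := by
    rw [nsmul_addRight, Equiv.ext_iff]
    simp
  exact Nat.dvd_right_iff_eq.1 fun n => by
    rw [orderOf_dvd_iff_pow_eq_one, addOrderOf_dvd_iff_nsmul_eq_zero, hpow]

theorem addRight_mem_derangements_iff [AddGroup A] {k : A} :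
    Equiv.addRight k ∈ derangements A ↔ k ≠ 0 := by
  simp [derangements]

theorem ncard_addOrderOf_eq [AddGroup A] [Finite A] [IsAddCyclic A] {d : ℕ}
    (hd : d ∣ Nat.card A) :
    {k : A | addOrderOf k = d}.ncard = φ d := by
  have := Fintype.ofFinite A
  rw [Set.ncard_eq_toFinset_card', Set.toFinset_ofPred, IsAddCyclic.card_addOrderOf_eq_totient]
  rwa [← Nat.card_eq_fintype_card]

variable [AddCommGroup A]

theorem subLeft_mem_derangements_iff {a : A} : Equiv.subLeft a ∈ derangements A ↔ ¬Even a := by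
  simp [derangements, Even, sub_eq_iff_eq_add]

theorem subLeft_sq (a : A) : Equiv.subLeft a ^ 2 = 1 := by
  ext i
  simp [sq]

theorem orderOf_subLeft (hA : ∃ b : A, b + b ≠ 0) (a : A) : orderOf (Equiv.subLeft a) = 2 := by
  refine orderOf_eq_prime (subLeft_sq a) fun h => ?_
  obtain ⟨b, hb⟩ := hA
  have hfix (i : A) : a = i + i := sub_eq_iff_eq_add.1 (Equiv.congr_fun h i)
  exact hb (by rw [← hfix b, hfix 0, add_zero])

theorem isConj_subLeft_addRight_iff [Finite A] (hA : ∃ b : A, b + b ≠ 0) {a k : A} :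
    IsConj (Equiv.subLeft a) (Equiv.addRight k) ↔ ¬Even a ∧ addOrderOf k = 2 := by
  have hderangement (hk : addOrderOf k = 2) : Equiv.addRight k ∈ derangements A :=
    addRight_mem_derangements_iff.2 (addOrderOf_eq_prime_iff.1 hk).2
  constructor
  · intro h
    obtain ⟨c, hc⟩ := isConj_iff_exists_semiconjBy.1 h
    have hk : addOrderOf k = 2 := by
      rw [← orderOf_addRight, ← hc.orderOf_eq, orderOf_subLeft hA]
    exact ⟨subLeft_mem_derangements_iff.1 <| mem_derangements_of_isConj h.symm <|
      hderangement hk, hk⟩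
  · rintro ⟨ha, hk⟩
    have hk2 : Equiv.addRight k ^ 2 = 1 := by
      rw [← hk, ← orderOf_addRight, pow_orderOf_eq_one]
    exact isConj_of_sq_eq_one_of_mem_derangements (subLeft_sq a)
      (subLeft_mem_derangements_iff.2 ha) hk2 (hderangement hk)

theorem nat_card_fixed_strings [Fintype A] (hA : ∃ b : A, b + b ≠ 0) (a k : A)
    [Decidable (¬Even a ∧ addOrderOf k = 2)] :
    Nat.card {x : A → A // Function.Bijective x ∧ ∀ i, x i = x (a - i) + k} =
      if ¬Even a ∧ addOrderOf k = 2 then (Fintype.card A)‼ else 0 := by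
  have hconj : IsConj (Equiv.subLeft a) (Equiv.addRight k)⁻¹ ↔ ¬Even a ∧ addOrderOf k = 2 := by
    rw [neg_addRight, isConj_subLeft_addRight_iff hA, addOrderOf_neg]
  refine (nat_card_bijective_eq_nat_card_semiconjBy (Equiv.subLeft a) (Equiv.addRight k)).trans ?_
  split_ifs with h
  · rw [nat_card_semiconjBy_of_isConj (hconj.2 h),
      nat_card_centralizer_of_sq_eq_one_of_mem_derangements (subLeft_sq a)
        (subLeft_mem_derangements_iff.2 h.1)]
  · exact nat_card_semiconjBy_of_not_isConj (hconj.not.2 h)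

theorem total_fixed_strings_cmv_rk_general [Fintype A] (hA : ∃ b : A, b + b ≠ 0) (c : A) :
    ∑ m : A, ∑ k : A,
        Nat.card {x : A → A // Function.Bijective x ∧ ∀ i, x i = x (m - (i + c)) + k} =
      {a : A | ¬Even a}.ncard * {k : A | addOrderOf k = 2}.ncard * (Fintype.card A)‼ := by
  classical
  simp only [add_comm _ c, ← sub_sub]
  refine ((Equiv.subRight c).sum_comp fun a => ∑ k : A,
    Nat.card {x : A → A // Function.Bijective x ∧ ∀ i, x i = x (a - i) + k}).trans ?_
  simp only [nat_card_fixed_strings hA, Set.ncard_eq_toFinset_card', Set.toFinset_ofPred]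
  rw [← sum_product', ← sum_filter, filter_product (¬Even ·) (addOrderOf · = 2), sum_const,
    card_product, smul_eq_mul]

theorem ncard_not_even [Finite A] [IsAddCyclic A] :
    {a : A | ¬Even a}.ncard = Nat.card A - Nat.card A / (Nat.card A).gcd 2 := by
  have hrange : {a : A | ¬Even a} = ((nsmulAddMonoidHom 2 : A →+ A).range : Set A)ᶜ := by
    ext a
    simp [even_iff_exists_two_nsmul, eq_comm]
  rw [hrange, Set.ncard_compl, ← Nat.card_coe_set_eq]
  exact congrArg _ (IsAddCyclic.card_nsmulAddMonoidHom_range A 2)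

theorem ncard_not_even_mul_ncard_addOrderOf_eq_two [Finite A] [IsAddCyclic A] :
    {a : A | ¬Even a}.ncard * {k : A | addOrderOf k = 2}.ncard =
      if Even (Nat.card A) then Nat.card A / 2 else 0 := by
  rw [ncard_not_even]
  split_ifs with h
  · rw [ncard_addOrderOf_eq h.two_dvd, totient_two, Nat.gcd_eq_right h.two_dvd]
    have := Nat.div_two_mul_two_of_even h
    omega
  · rw [Nat.Coprime.gcd_eq_one (Nat.not_even_iff_odd.1 h).coprime_two_right]
    simp

end AddGroup

theorem zmod_one_add_one_ne_zero {n : ℕ} (hn : 3 ≤ n) : (1 + 1 : ZMod n) ≠ 0 := by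
  rw [one_add_one_eq_two, ← Nat.cast_two, Ne, ZMod.natCast_eq_zero_iff]
  exact Nat.not_dvd_of_pos_of_lt two_pos hn

/-- The total number of strings fixed by the elements `(c^m v, r^k)` (reverse,
cyclically shift by `m`, and add `k` to every label) is `(n/2)·n!!` if `n` is
even and `0` if `n` is odd. -/
theorem total_fixed_strings_cmv_rk (n : ℕ) (hn : 3 ≤ n) [NeZero n] :
    ∑ m : ZMod n, ∑ k : ZMod n,
        Nat.card {x : ZMod n → ZMod n // Function.Bijective x ∧
          ∀ i : ZMod n, x i = x (m - (i + 1)) + k} =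
      if Even n then (n / 2) * Nat.doubleFactorial n else 0 := by
  rw [total_fixed_strings_cmv_rk_general ⟨1, zmod_one_add_one_ne_zero hn⟩,
    ncard_not_even_mul_ncard_addOrderOf_eq_two, Nat.card_zmod, ZMod.card, ite_mul, zero_mul]
end

section
/- Let n ≥ 3 be an integer. Then Σ_{m : ZMod n} Σ_{k : ZMod n} #{ x : ZMod n → ZMod n bijective | ∀ i : ZMod n, x i = -(x (m - (i + 1))) - k } equals (n/2 + 1) * (n/2) * n!! if n is even and n² * (n-1)!! if n is odd. -/
open Nat

/-!
A string `x` is fixed exactly when it intertwines the reflection `i ↦ a - i` of the positions with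
the reflection `y ↦ b - y` of the labels, where `a = m - 1` and `b = -k`. If two involutions have
supports of the same size `s`, then they are conjugate and their intertwiners form a coset of the
centralizer, of order `(n - s)! * s‼`; otherwise there are none. The reflection `y ↦ c - y` fixes
`y` when `2y = c`, so in a finite abelian group it has as many fixed points as there are elements
killed by `2` if `c` is a double, and none if not. It remains to count the pairs `(a, b)` of
doubles and the pairs of non-doubles.
-/

section Intertwiners

variable {G : Type*} [Group G] {a b : G}

lemma card_semiconjBy_of_isConj (h : IsConj a b) :
    Nat.card {g // SemiconjBy g a b} = Nat.card (Subgroup.centralizer {a}) := by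
  obtain ⟨c, rfl⟩ := isConj_iff.1 h
  refine Nat.card_congr ((Equiv.mulLeft c⁻¹).subtypeEquiv fun g => ?_)
  simp only [Equiv.coe_mulLeft, Subgroup.mem_centralizer_singleton_iff, SemiconjBy, mul_assoc,
    inv_mul_eq_iff_eq_mul]

lemma card_semiconjBy_of_not_isConj (h : ¬ IsConj a b) : Nat.card {g // SemiconjBy g a b} = 0 := by
  have : IsEmpty {g // SemiconjBy g a b} :=
    ⟨fun ⟨g, hg⟩ => h (isConj_iff.2 ⟨g, mul_inv_eq_of_eq_mul hg⟩)⟩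
  exact Nat.card_of_isEmpty

end Intertwiners

section Involutions

variable {α : Type*} {ρ σ : Equiv.Perm α}

lemma card_bijective_eq_card_semiconjBy (hρ : ρ ^ 2 = 1) :
    Nat.card {x : α → α // x.Bijective ∧ ∀ i, x i = σ (x (ρ i))} =
      Nat.card {g : Equiv.Perm α // SemiconjBy g ρ σ} := by
  have hρρ (i : α) : ρ (ρ i) = i := by rw [← Equiv.Perm.mul_apply, ← sq, hρ, Equiv.Perm.one_apply]
  have intertwines_iff (g : Equiv.Perm α) : SemiconjBy g ρ σ ↔ ∀ i, g i = σ (g (ρ i)) := by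
    rw [SemiconjBy, Equiv.ext_iff]
    refine ⟨fun h i => ?_, fun h i => ?_⟩
    · simpa [hρρ] using h (ρ i)
    · simpa [hρρ] using h (ρ i)
  refine Nat.card_congr ⟨fun x => ⟨.ofBijective x.1 x.2.1, (intertwines_iff _).2 x.2.2⟩,
    fun g => ⟨g.1, g.1.bijective, (intertwines_iff _).1 g.2⟩, fun _ => rfl, fun _ => ?_⟩
  ext
  rfl

variable [Fintype α] [DecidableEq α]

lemma cycleType_of_sq_eq_one (hρ : ρ ^ 2 = 1) :
    ρ.cycleType = Multiset.replicate (ρ.support.card / 2) 2 := by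
  have hrep := Equiv.Perm.cycleType_of_pow_prime_eq_one hρ
  have hsum : ρ.cycleType.card * 2 = ρ.support.card := by
    rw [← ρ.sum_cycleType, hrep, Multiset.sum_replicate, Multiset.card_replicate, smul_eq_mul]
  rwa [← hsum, Nat.mul_div_cancel _ two_pos]

lemma isConj_iff_card_support_eq (hρ : ρ ^ 2 = 1) (hσ : σ ^ 2 = 1) :
    IsConj ρ σ ↔ ρ.support.card = σ.support.card := by
  rw [Equiv.Perm.isConj_iff_cycleType_eq]
  refine ⟨fun h => ?_, fun h => ?_⟩
  · rw [← ρ.sum_cycleType, h, σ.sum_cycleType]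
  · rw [cycleType_of_sq_eq_one hρ, h, ← cycleType_of_sq_eq_one hσ]

lemma card_centralizer_of_sq_eq_one (hρ : ρ ^ 2 = 1) :
    Nat.card (Subgroup.centralizer {ρ}) =
      (Fintype.card α - ρ.support.card)! * ρ.support.card‼ := by
  obtain ⟨r, hr⟩ := Equiv.Perm.two_dvd_card_support hρ
  have hcycle : ρ.cycleType = Multiset.replicate r 2 := by
    rw [cycleType_of_sq_eq_one hρ, hr, Nat.mul_div_cancel_left _ two_pos]
  have hcount : ∏ l ∈ ρ.cycleType.toFinset, (ρ.cycleType.count l)! = r ! := by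
    rcases eq_or_ne r 0 with rfl | hr0
    · simp [hcycle]
    · simp [hcycle, Multiset.toFinset_replicate, hr0]
  rw [Equiv.Perm.nat_card_centralizer, ρ.sum_cycleType, hcount, hcycle, Multiset.prod_replicate,
    hr, doubleFactorial_two_mul, mul_assoc]

lemma card_bijective_intertwining (hρ : ρ ^ 2 = 1) (hσ : σ ^ 2 = 1) :
    Nat.card {x : α → α // x.Bijective ∧ ∀ i, x i = σ (x (ρ i))} =
      if ρ.support.card = σ.support.card then
        (Fintype.card α - ρ.support.card)! * ρ.support.card‼
      else 0 := by
  rw [card_bijective_eq_card_semiconjBy hρ]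
  split_ifs with h
  · rw [card_semiconjBy_of_isConj ((isConj_iff_card_support_eq hρ hσ).2 h),
      card_centralizer_of_sq_eq_one hρ]
  · exact card_semiconjBy_of_not_isConj (mt (isConj_iff_card_support_eq hρ hσ).1 h)

end Involutions

lemma sum_sum_ite_both_or_neither {ι R : Type*} [Fintype ι] [CommSemiring R] (p : ι → Prop)
    [DecidablePred p] (u v : R) :
    ∑ a, ∑ b, (if p a then if p b then u else 0 else if p b then 0 else v) =
      (Finset.univ.filter p).card ^ 2 * u + (Finset.univ.filter fun a => ¬ p a).card ^ 2 * v := by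
  have hrow (a : ι) : ∑ b, (if p a then if p b then u else 0 else if p b then 0 else v) =
      if p a then (Finset.univ.filter p).card * u
      else (Finset.univ.filter fun a => ¬ p a).card * v := by
    split_ifs <;> simp [Finset.sum_ite]
  simp only [hrow, Finset.sum_ite, Finset.sum_const, nsmul_eq_mul]
  ring

section Fibers

variable {G H : Type*} [AddGroup G] [AddGroup H] {f : G →+ H} {c : H}

lemma card_fiber_of_mem_range (hc : c ∈ f.range) : Nat.card (f ⁻¹' {c}) = Nat.card f.ker := by
  obtain ⟨z, rfl⟩ := hc
  exact Nat.card_congr (f.fiberEquivKer z)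

lemma card_fiber_of_notMem_range (hc : c ∉ f.range) : Nat.card (f ⁻¹' {c}) = 0 := by
  have : IsEmpty (f ⁻¹' {c}) := ⟨fun y => hc ⟨y.1, y.2⟩⟩
  exact Nat.card_of_isEmpty

end Fibers

section Reflections

variable {G : Type*} [AddCommGroup G]

variable (G) in
/-- The doubling endomorphism `y ↦ 2 • y`: the reflection `y ↦ c - y` fixes exactly the elements of
its fibre over `c`. -/
abbrev doubling : G →+ G := nsmulAddMonoidHom 2

lemma subLeft_sq_eq_one (c : G) : (Equiv.subLeft c : Equiv.Perm G) ^ 2 = 1 := by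
  ext y
  simp [sq]

lemma card_support_subLeft [Fintype G] [DecidableEq G] (c : G) :
    (Equiv.Perm.support (Equiv.subLeft c)).card =
      Nat.card G - Nat.card (doubling G ⁻¹' {c}) := by
  have hsupport : (Equiv.Perm.support (Equiv.subLeft c) : Set G) = (doubling G ⁻¹' {c})ᶜ := by
    ext y
    simp [two_nsmul, sub_eq_iff_eq_add, eq_comm (b := c)]
  rw [← Set.ncard_coe_finset, hsupport, Set.ncard_compl, Nat.card_coe_set_eq]

lemma card_bijective_reflecting [Finite G] (a b : G) [DecidablePred (· ∈ (doubling G).range)] :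
    Nat.card {x : G → G // x.Bijective ∧ ∀ i, x i = b - x (a - i)} =
      if a ∈ (doubling G).range then
        if b ∈ (doubling G).range then
          (Nat.card (doubling G).ker)! * (Nat.card G - Nat.card (doubling G).ker)‼
        else 0
      else if b ∈ (doubling G).range then 0 else (Nat.card G)‼ := by
  classical
  have := Fintype.ofFinite G
  have hpos : 0 < Nat.card (doubling G).ker := Nat.card_pos
  have hle : Nat.card (doubling G).ker ≤ Nat.card G := AddSubgroup.card_le_card_addGroup _
  refine (card_bijective_intertwining (subLeft_sq_eq_one a) (subLeft_sq_eq_one b)).trans ?_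
  rw [card_support_subLeft, card_support_subLeft, Fintype.card_eq_nat_card]
  by_cases ha : a ∈ (doubling G).range <;> by_cases hb : b ∈ (doubling G).range <;>
    simp only [ha, hb, card_fiber_of_mem_range, card_fiber_of_notMem_range, if_true, if_false,
      not_false_eq_true]
  · rw [Nat.sub_sub_self hle]
  · rw [if_neg (by omega)]
  · rw [if_neg (by omega)]
  · simp

variable (G) in
lemma sum_card_bijective_reflecting [Fintype G] :
    ∑ a : G, ∑ b : G, Nat.card {x : G → G // x.Bijective ∧ ∀ i, x i = b - x (a - i)} =
      Nat.card (doubling G).range ^ 2 *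
          ((Nat.card (doubling G).ker)! * (Nat.card G - Nat.card (doubling G).ker)‼) +
        (Nat.card G - Nat.card (doubling G).range) ^ 2 * (Nat.card G)‼ := by
  classical
  have hrange : (Finset.univ.filter (· ∈ (doubling G).range)).card =
      Nat.card (doubling G).range := by
    rw [← Fintype.card_subtype, Fintype.card_eq_nat_card]
  have hcompl : (Finset.univ.filter (· ∉ (doubling G).range)).card =
      Nat.card G - Nat.card (doubling G).range := by
    rw [← Finset.compl_filter, Finset.card_compl, hrange, Fintype.card_eq_nat_card]
  simp only [card_bijective_reflecting]
  rw [sum_sum_ite_both_or_neither, hrange, hcompl, Nat.cast_id, Nat.cast_id]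

theorem total_fixed_strings_cmv_srk_general [Fintype G] {n h t : ℕ}
    (hn : Nat.card G = n) (hh : Nat.card (doubling G).range = h)
    (ht : Nat.card (doubling G).ker = t) (s : G) :
    ∑ m : G, ∑ k : G,
        Nat.card {x : G → G // x.Bijective ∧ ∀ i, x i = -(x (m - (i + s))) - k} =
      h ^ 2 * (t ! * (n - t)‼) + (n - h) ^ 2 * n‼ := by
  subst hn hh ht
  rw [← sum_card_bijective_reflecting]
  refine Fintype.sum_equiv (Equiv.subRight s) _ _ fun m => ?_
  refine Fintype.sum_equiv (Equiv.neg G) _ _ fun k => ?_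
  have position_eq (i : G) : m - (i + s) = m - s - i := by abel
  have label_eq (y : G) : -y - k = -k - y := by abel
  simp only [position_eq, label_eq, Equiv.subRight_apply, Equiv.neg_apply]

end Reflections

lemma total_gcd_two_eq_ite_even (n : ℕ) :
    (n / n.gcd 2) ^ 2 * ((n.gcd 2)! * (n - n.gcd 2)‼) + (n - n / n.gcd 2) ^ 2 * n‼ =
      if Even n then (n / 2 + 1) * (n / 2) * n‼ else n ^ 2 * (n - 1)‼ := by
  split_ifs with hn
  · rw [Nat.gcd_eq_right hn.two_dvd]
    obtain ⟨h, rfl⟩ := hn.two_dvd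
    rw [Nat.mul_div_cancel_left h two_pos, show 2 * h - h = h by omega]
    cases h with
    | zero => simp
    | succ r =>
      rw [show 2 * (r + 1) - 2 = 2 * r by omega, Nat.mul_add_one, doubleFactorial_add_two,
        factorial_two]
      ring
  · rw [Nat.coprime_two_right.2 (Nat.not_even_iff_odd.1 hn), Nat.div_one]
    simp

/-- The total number of strings fixed by the elements `(c^m v, s r^k)` (reverse,
cyclically shift by `m`, and replace every label `x` by `-x - k`) is
`(n/2 + 1)·(n/2)·n!!` if `n` is even and `n²·(n-1)!!` if `n` is odd. -/
theorem total_fixed_strings_cmv_srk (n : ℕ) (hn : 3 ≤ n) [NeZero n] :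
    ∑ m : ZMod n, ∑ k : ZMod n,
        Nat.card {x : ZMod n → ZMod n // Function.Bijective x ∧
          ∀ i : ZMod n, x i = -(x (m - (i + 1))) - k} =
      if Even n then (n / 2 + 1) * (n / 2) * Nat.doubleFactorial n
      else n ^ 2 * Nat.doubleFactorial (n - 1) := by
  have hcard := Nat.card_zmod n
  rw [total_fixed_strings_cmv_srk_general hcard (IsAddCyclic.card_nsmulAddMonoidHom_range _ 2)
    (IsAddCyclic.card_nsmulAddMonoidHom_ker _ 2), hcard, total_gcd_two_eq_ite_even]
end

section
/- Let n ≥ 3 be an odd integer and let m, k : ZMod n. Then there is no bijection x : ZMod n → ZMod n satisfying x i = x (m - (i + 1)) + k for all i : ZMod n. -/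
/-!
For odd `n`, `m - 1` is twice an element of `ZMod n`, so the reflection `i ↦ (m - 1) - i` has a
fixed point. Comparing labels there forces `k = 0`; since `x` is injective, the reflection is then
the identity. Hence `m - 1 = 0` and every element is its own negative, which fails for `n ≥ 3`.
-/

open Function

theorem eq_id_of_forall_apply_eq_apply_add {α M : Type*} [AddMonoid M] [IsLeftCancelAdd M]
    {x : α → M} (hx : Injective x) {f : α → α} {c : α} (hc : IsFixedPt f c) {k : M}
    (h : ∀ i, x i = x (f i) + k) : f = id := by
  have hk : k = 0 := by simpa only [hc.eq, left_eq_add] using h c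
  funext i
  exact hx (by simpa only [hk, add_zero, id_eq] using (h i).symm)

theorem const_sub_ne_id {G : Type*} [AddGroup G] {g : G} (hg : g + g ≠ 0) (a : G) :
    (a - ·) ≠ id := by
  intro h
  have ha : a = 0 := (sub_zero a).symm.trans (congrFun h 0)
  have hag : a = g + g := sub_eq_iff_eq_add.mp (congrFun h g)
  exact hg (hag.symm.trans ha)

theorem isUnit_two_zmod_of_odd {n : ℕ} (hn : Odd n) : IsUnit (2 : ZMod n) :=
  (ZMod.isUnit_iff_coprime 2 n).mpr (Nat.coprime_two_left.mpr hn)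

theorem one_add_one_ne_zero_zmod {n : ℕ} (hn : 2 < n) : (1 + 1 : ZMod n) ≠ 0 := by
  have : Fact (2 < n) := ⟨hn⟩
  exact fun h ↦ ZMod.neg_one_ne_one (neg_eq_of_add_eq_zero_left h)

theorem no_fixed_strings_cmv_rk_odd_general {G M : Type*} [AddGroup G] [AddMonoid M]
    [IsLeftCancelAdd M] {g : G} (hg : g + g ≠ 0) {a : G} (ha : Even a) (k : M) :
    ¬ ∃ x : G → M, Injective x ∧ ∀ i, x i = x (a - i) + k := by
  rintro ⟨x, hx, h⟩
  obtain ⟨c, hc⟩ := ha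
  have c_isFixedPt : IsFixedPt (a - ·) c := sub_eq_of_eq_add hc
  exact const_sub_ne_id hg a (eq_id_of_forall_apply_eq_apply_add hx c_isFixedPt h)

/-- For odd `n ≥ 3`, no string is fixed by any element `(c^m v, r^k)`: there is no
bijection `x : ZMod n → ZMod n` with `x i = x (m - (i + 1)) + k` for all `i`. -/
theorem no_fixed_strings_cmv_rk_odd (n : ℕ) (hn : 3 ≤ n) (hodd : Odd n)
    (m k : ZMod n) :
    ¬ ∃ x : ZMod n → ZMod n, Function.Bijective x ∧
        ∀ i : ZMod n, x i = x (m - (i + 1)) + k := by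
  rintro ⟨x, hx, h⟩
  have even_shift : Even (m - 1) := .of_isUnit_two (isUnit_two_zmod_of_odd hodd) _
  exact no_fixed_strings_cmv_rk_odd_general (one_add_one_ne_zero_zmod hn) even_shift k
    ⟨x, hx.injective, by simpa only [sub_add_eq_sub_sub_swap] using h⟩
end
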